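/- Let F be a field with char F ≠ 2 and char F ≠ 3, and let M be a Malcev algebra over F satisfying the identity h(y,z,t,x,u) = 0 for all y, z, t, x, u ∈ M. Then for all x, y, z, t, u ∈ M: (i) p(x,y,z,t)·u = p(xu, y, z, t), and (ii) p(x, y, z, ut) = p(x, u, t, yz). -/

import Mathlib

open TensorProduct

/-- Multiplication of the 7-dimensional simple non-Lie Malcev algebra `M₇(F)`,
realised on `Fin 7 → F`; the index `t` corresponds to the basis element `e_{t+1}`. -/
def m7mul {F : Type*} [Field F] (a b : Fin 7 → F) : Fin 7 → F :=
  ![(a 1 * b 4 - a 4 * b 1) + (a 2 * b 5 - a 5 * b 2) + (a 3 * b 6 - a 6 * b 3),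
    2 * (a 0 * b 1 - a 1 * b 0) - 2 * (a 5 * b 6 - a 6 * b 5),
    2 * (a 0 * b 2 - a 2 * b 0) + 2 * (a 4 * b 6 - a 6 * b 4),
    2 * (a 0 * b 3 - a 3 * b 0) - 2 * (a 4 * b 5 - a 5 * b 4),
    -2 * (a 0 * b 4 - a 4 * b 0) + 2 * (a 2 * b 3 - a 3 * b 2),
    -2 * (a 0 * b 5 - a 5 * b 0) - 2 * (a 1 * b 3 - a 3 * b 1),
    -2 * (a 0 * b 6 - a 6 * b 0) + 2 * (a 1 * b 2 - a 2 * b 1)]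

/-- Multiplication of the 7-dimensional Malcev algebra `𝕄₇(γ)` coming from the
division Cayley–Dickson algebra, realised on `Fin 7 → F`; the indices
`0,…,6` correspond to the basis `i, j, k, v, vi, vj, vk`. -/
def mGammaMul {F : Type*} [Field F] (γ : F) (a b : Fin 7 → F) : Fin 7 → F :=
  ![2 * (a 1 * b 2 - a 2 * b 1) + 2 * γ * (a 3 * b 4 - a 4 * b 3)
      + 2 * γ * (a 5 * b 6 - a 6 * b 5),
    -2 * (a 0 * b 2 - a 2 * b 0) + 2 * γ * (a 3 * b 5 - a 5 * b 3)
      - 2 * γ * (a 4 * b 6 - a 6 * b 4),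
    2 * (a 0 * b 1 - a 1 * b 0) + 2 * γ * (a 3 * b 6 - a 6 * b 3)
      + 2 * γ * (a 4 * b 5 - a 5 * b 4),
    2 * (a 0 * b 4 - a 4 * b 0) + 2 * (a 1 * b 5 - a 5 * b 1)
      + 2 * (a 2 * b 6 - a 6 * b 2),
    -2 * (a 0 * b 3 - a 3 * b 0) - 2 * (a 1 * b 6 - a 6 * b 1)
      + 2 * (a 2 * b 5 - a 5 * b 2),
    2 * (a 0 * b 6 - a 6 * b 0) - 2 * (a 1 * b 3 - a 3 * b 1)
      - 2 * (a 2 * b 4 - a 4 * b 2),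
    -2 * (a 0 * b 5 - a 5 * b 0) + 2 * (a 1 * b 4 - a 4 * b 1)
      - 2 * (a 2 * b 3 - a 3 * b 2)]

/-- The Jacobian `J(x,y,z) = (xy)z + (yz)x + (zx)y` of a multiplication. -/
def malJac {A : Type*} [Add A] (mul : A → A → A) (x y z : A) : A :=
  mul (mul x y) z + mul (mul y z) x + mul (mul z x) y

/-- `mul` is a Malcev multiplication: `x·x = 0` and `J(x,y,xz) = J(x,y,z)·x`. -/
def IsMalcevFun {A : Type*} [AddCommGroup A] (mul : A → A → A) : Prop :=
  (∀ x, mul x x = 0) ∧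
    ∀ x y z, malJac mul x y (mul x z) = mul (malJac mul x y z) x

/-- `e 0, …, e 6` is a copy of the standard basis `e₁, …, e₇` of `M₇(F)`:
linearly independent elements multiplying according to the `M₇(F)` table. -/
def IsM7Copy {F M : Type*} [Field F] [AddCommGroup M] [Module F M]
    (mul : M →ₗ[F] M →ₗ[F] M) (e : Fin 7 → M) : Prop :=
  LinearIndependent F e ∧
  (∀ s t : Fin 7, mul (e s) (e t) = - mul (e t) (e s)) ∧
  mul (e 0) (e 1) = (2 : F) • e 1 ∧
  mul (e 0) (e 2) = (2 : F) • e 2 ∧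
  mul (e 0) (e 3) = (2 : F) • e 3 ∧
  mul (e 0) (e 4) = (-2 : F) • e 4 ∧
  mul (e 0) (e 5) = (-2 : F) • e 5 ∧
  mul (e 0) (e 6) = (-2 : F) • e 6 ∧
  mul (e 1) (e 2) = (2 : F) • e 6 ∧
  mul (e 1) (e 3) = (-2 : F) • e 5 ∧
  mul (e 1) (e 4) = e 0 ∧
  mul (e 1) (e 5) = 0 ∧
  mul (e 1) (e 6) = 0 ∧
  mul (e 2) (e 3) = (2 : F) • e 4 ∧
  mul (e 2) (e 4) = 0 ∧
  mul (e 2) (e 5) = e 0 ∧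
  mul (e 2) (e 6) = 0 ∧
  mul (e 3) (e 4) = 0 ∧
  mul (e 3) (e 5) = 0 ∧
  mul (e 3) (e 6) = e 0 ∧
  mul (e 4) (e 5) = (-2 : F) • e 3 ∧
  mul (e 4) (e 6) = (2 : F) • e 2 ∧
  mul (e 5) (e 6) = (-2 : F) • e 1

/-- `e 0, …, e 6` is a copy of the basis `i, j, k, v, vi, vj, vk` of `𝕄₇(γ)`:
linearly independent elements multiplying according to the `𝕄₇(γ)` table. -/
def IsMGammaCopy {F M : Type*} [Field F] [AddCommGroup M] [Module F M]
    (γ : F) (mul : M →ₗ[F] M →ₗ[F] M) (e : Fin 7 → M) : Prop :=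
  LinearIndependent F e ∧
  (∀ s t : Fin 7, mul (e s) (e t) = - mul (e t) (e s)) ∧
  mul (e 0) (e 1) = (2 : F) • e 2 ∧
  mul (e 0) (e 2) = (-2 : F) • e 1 ∧
  mul (e 0) (e 3) = (-2 : F) • e 4 ∧
  mul (e 0) (e 4) = (2 : F) • e 3 ∧
  mul (e 0) (e 5) = (-2 : F) • e 6 ∧
  mul (e 0) (e 6) = (2 : F) • e 5 ∧
  mul (e 1) (e 2) = (2 : F) • e 0 ∧
  mul (e 1) (e 3) = (-2 : F) • e 5 ∧
  mul (e 1) (e 4) = (2 : F) • e 6 ∧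
  mul (e 1) (e 5) = (2 : F) • e 3 ∧
  mul (e 1) (e 6) = (-2 : F) • e 4 ∧
  mul (e 2) (e 3) = (-2 : F) • e 6 ∧
  mul (e 2) (e 4) = (-2 : F) • e 5 ∧
  mul (e 2) (e 5) = (2 : F) • e 4 ∧
  mul (e 2) (e 6) = (2 : F) • e 3 ∧
  mul (e 3) (e 4) = (2 * γ) • e 0 ∧
  mul (e 3) (e 5) = (2 * γ) • e 1 ∧
  mul (e 3) (e 6) = (2 * γ) • e 2 ∧
  mul (e 4) (e 5) = (2 * γ) • e 2 ∧
  mul (e 4) (e 6) = (-(2 * γ)) • e 1 ∧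
  mul (e 5) (e 6) = (2 * γ) • e 0

/-- The multiplication of the split null extension `E = M ⊕ V` of a Malcev
algebra `M` by a module `V` with representation `ρ`:
`(x + v)(y + w) = xy + (ρ_y v − ρ_x w)`. -/
def sneFun {F M V : Type*} [Field F] [AddCommGroup M] [Module F M]
    [AddCommGroup V] [Module F V]
    (mul : M → M → M) (ρ : M →ₗ[F] Module.End F V) (p q : M × V) : M × V :=
  (mul p.1 q.1, ρ q.1 p.2 - ρ p.1 q.2)

/-- The function `{x,y,z} = (xy)z − (xz)y + 2x(yz)`. -/
def trip (F : Type*) {A : Type*} [Field F] [AddCommGroup A] [Module F A]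
    (mul : A → A → A) (x y z : A) : A :=
  mul (mul x y) z - mul (mul x z) y + (2 : F) • mul x (mul y z)

/-- The function `h(y,z,t,x,u) = {yz,t,u}x + {yz,t,x}u + {yx,z,u}t + {yu,z,x}t`. -/
def hfun (F : Type*) {A : Type*} [Field F] [AddCommGroup A] [Module F A]
    (mul : A → A → A) (y z t x u : A) : A :=
  mul (trip F mul (mul y z) t u) x + mul (trip F mul (mul y z) t x) u
    + mul (trip F mul (mul y x) z u) t + mul (trip F mul (mul y u) z x) t

/-- The function `p(x,y,z,t) = −{zt,x,y} − {yt,z,x} + {xt,y,z}`. -/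
def pfun (F : Type*) {A : Type*} [Field F] [AddCommGroup A] [Module F A]
    (mul : A → A → A) (x y z t : A) : A :=
  - trip F mul (mul z t) x y - trip F mul (mul y t) z x + trip F mul (mul x t) y z

/-- `α` belongs to the centroid `Γ(M)`: `(xα)y = (xy)α = x(yα)` for all `x, y`. -/
def IsCentroidElem {F M : Type*} [Field F] [AddCommGroup M] [Module F M]
    (mul : M →ₗ[F] M →ₗ[F] M) (α : M →ₗ[F] M) : Prop :=
  ∀ x y : M, mul (α x) y = α (mul x y) ∧ mul x (α y) = α (mul x y)

/-!
Write `J` for the Jacobian and `e(x,y,z,t) = J(xy,z,t) + J(zt,x,y)`. Linearizing the Malcev identity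
shows that `e` is alternating, and every identity below comes from expanding `e` or `J` at a product
and collecting terms modulo this symmetry. Since `{x,y,z} = J(x,y,z) + 3x(yz)`, also
`e(x,y,z,t) = {xy,z,t} + {zt,x,y}`, which turns terms in `e` into terms of `h`.

For (i), `p(x,y,z,t)` is `e(x,y,z,t)` minus the cyclic sum over `y, z, t` of `{yz,x,t}`.
Substituting `xu` for `x` gives `e(u,y,z,t)x - e(x,y,z,t)u` minus the cyclic sum of `{yz,x,u}t`,
and this differs from `p(x,y,z,t)u` by three values of `h`.

For (ii), the sum `p(x,u,t,yz) + {xu,y,z}t - {xt,y,z}u` does not change when the pairs `(y,z)` and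
`(u,t)` are exchanged, and the change in its last two terms is a difference of two values of `h`.
-/

namespace Malcev

section Ring

variable {R : Type*} [NonUnitalNonAssocRing R]

/-- The Jacobian: `malJac` for the multiplication of a nonassociative ring. -/
def jac (x y z : R) : R := x * y * z + y * z * x + z * x * y

/-- The function `e(x,y,z,t) = J(xy,z,t) + J(zt,x,y)`, which alternates in Malcev rings; away from
2-torsion it is half of Sagle's function `J(xy,z,t) - yJ(x,z,t) - J(y,z,t)x`. -/
def pairJac (x y z t : R) : R := jac (x * y) z t + jac (z * t) x y

/-- The function `{x,y,z}`: `trip` for the multiplication of a nonassociative ring. -/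
def triple (x y z : R) : R := x * y * z - x * z * y + 2 • (x * (y * z))

/-- The function `h`: `hfun` for the multiplication of a nonassociative ring. -/
def hFn (y z t x u : R) : R :=
  triple (y * z) t u * x + triple (y * z) t x * u + triple (y * x) z u * t +
    triple (y * u) z x * t

/-- The function `p`: `pfun` for the multiplication of a nonassociative ring. -/
def pFn (x y z t : R) : R :=
  -triple (z * t) x y - triple (y * t) z x + triple (x * t) y z

@[grind =]
theorem jac_rotate (x y z : R) : jac y z x = jac x y z := by
  simp only [jac]; abel

theorem jac_neg_left (x y z : R) : jac (-x) y z = -jac x y z := by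
  simp only [jac, neg_mul, mul_neg]; abel

@[grind =]
theorem pairJac_rev (x y z t : R) : pairJac z t x y = pairJac x y z t :=
  add_comm _ _

theorem pairJac_mul_eq_jac (x y z t u : R) :
    pairJac x y z t * u = jac (x * y) z t * u + jac (z * t) x y * u :=
  add_mul _ _ _

end Ring

/-- A nonassociative ring whose multiplication is alternating, hence anticommutative. -/
class IsAlternatingRing (R : Type*) [NonUnitalNonAssocRing R] : Prop where
  mul_self (x : R) : x * x = 0

section Alternating

variable {R : Type*} [NonUnitalNonAssocRing R] [IsAlternatingRing R]

theorem mul_swap (x y : R) : y * x = -(x * y) := by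
  have h : (x + y) * (x + y) = 0 := IsAlternatingRing.mul_self _
  rw [add_mul, mul_add, mul_add, IsAlternatingRing.mul_self, IsAlternatingRing.mul_self, zero_add,
    add_zero] at h
  exact eq_neg_of_add_eq_zero_right h

@[grind =]
theorem jac_swap (x y z : R) : jac y x z = -jac x y z := by
  simp only [jac, mul_swap x y, mul_swap y z, mul_swap z x, neg_mul]
  abel

@[grind =]
theorem jac_swap_mul (x y z t : R) : jac y x z * t = -(jac x y z * t) := by
  rw [jac_swap, neg_mul]

@[grind =]
theorem jac_mul_swap (x y z t : R) : jac (y * x) z t = -jac (x * y) z t := by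
  rw [mul_swap, jac_neg_left]

@[grind =]
theorem jac_mul_swap_mul (x y z t u : R) :
    jac (y * x) z t * u = -(jac (x * y) z t * u) := by
  rw [jac_mul_swap, neg_mul]

@[grind =]
theorem pairJac_swap_left (x y z t : R) : pairJac y x z t = -pairJac x y z t := by
  simp only [pairJac]
  grind

@[grind =]
theorem pairJac_swap_left_mul (x y z t u : R) :
    pairJac y x z t * u = -(pairJac x y z t * u) := by
  rw [pairJac_swap_left, neg_mul]

theorem sum_jac_mul (x y z t : R) :
    jac (x * y) z t + jac (x * z) t y + jac (x * t) y z +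
        jac (y * z) x t + jac (z * t) x y + jac (t * y) x z =
      jac x y z * t + jac x z t * y + jac x t y * z - jac y z t * x := by
  simp only [jac, add_mul, neg_mul, mul_neg, mul_swap x y, mul_swap x z, mul_swap x t,
    mul_swap y t, mul_swap (x * y), mul_swap (x * z), mul_swap (x * t), mul_swap (y * z) t,
    mul_swap (z * t) y, mul_swap (y * t) z]
  abel

theorem jac_mul_sub_jac_mul (x u t v : R) :
    jac (x * u) t v - jac (x * t) u v - jac x u t * v =
      x * (u * t) * v - x * u * (t * v) - x * t * (v * u) - x * u * v * t + x * t * v * u := by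
  simp only [jac, add_mul, mul_swap x t, mul_swap x (u * t), mul_swap (x * u) (t * v),
    mul_swap (x * u) v, mul_swap (x * t) (u * v), mul_swap (x * t) v, mul_swap u v, neg_mul,
    mul_neg]
  abel

theorem triple_eq_jac (x y z : R) : triple x y z = jac x y z + 3 • (x * (y * z)) := by
  simp only [triple, jac, mul_swap x (y * z), mul_swap x z, neg_mul]
  abel

@[grind =]
theorem triple_swap (x y z : R) : triple x z y = -triple x y z := by
  simp only [triple, mul_swap y z, mul_neg]
  abel

@[grind =]
theorem triple_swap_mul (x y z u : R) : triple x z y * u = -(triple x y z * u) := by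
  rw [triple_swap, neg_mul]

@[grind =]
theorem triple_mul_swap (x y z t : R) : triple (y * x) z t = -triple (x * y) z t := by
  simp only [triple, mul_swap x y, neg_mul]
  abel

@[grind =]
theorem triple_mul_swap_mul (x y z t u : R) :
    triple (y * x) z t * u = -(triple (x * y) z t * u) := by
  rw [triple_mul_swap, neg_mul]

theorem triple_mul_middle (w x u t : R) :
    triple w (x * u) t =
      triple w x u * t - 2 • jac w (x * u) t - jac w x u * t - 3 • (w * t * (x * u)) := by
  simp only [triple_eq_jac, jac, add_mul, smul_mul_assoc, mul_swap w (x * u * t), mul_swap w t,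
    neg_mul]
  abel

theorem pairJac_eq_triple (x y z t : R) :
    pairJac x y z t = triple (x * y) z t + triple (z * t) x y := by
  simp only [pairJac, triple_eq_jac, mul_swap (x * y) (z * t)]
  abel

theorem pairJac_mul_eq_triple (x y z t u : R) :
    pairJac x y z t * u = triple (x * y) z t * u + triple (z * t) x y * u := by
  rw [pairJac_eq_triple, add_mul]

end Alternating

/-- A nonassociative ring whose multiplication satisfies the axioms of a Malcev algebra. -/
class IsMalcevRing (R : Type*) [NonUnitalNonAssocRing R] : Prop extends IsAlternatingRing R where
  malcev (x y z : R) : jac x y (x * z) = jac x y z * x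

variable {R : Type*} [NonUnitalNonAssocRing R]

theorem isMalcevRing_of_isMalcevFun (h : IsMalcevFun fun x y : R ↦ x * y) : IsMalcevRing R where
  mul_self := h.1
  malcev := h.2

section MalcevRing

variable [IsMalcevRing R]

theorem malcev_linearized (x w y z : R) :
    jac x y (w * z) + jac w y (x * z) = jac x y z * w + jac w y z * x := by
  have hsum := IsMalcevRing.malcev (x + w) y z
  have hx := IsMalcevRing.malcev x y z
  have hw := IsMalcevRing.malcev w y z
  simp only [jac, mul_add, add_mul] at hsum hx hw ⊢
  linear_combination (norm := abel) hsum - hx - hw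

theorem jac_mul_left (x y z t : R) :
    jac (x * y) z t = jac (y * z) x t - jac x y t * z + jac y z t * x := by
  linear_combination (norm := grind) malcev_linearized x z t y

@[grind =]
theorem pairJac_swap_middle (x y z t : R) : pairJac x z y t = -pairJac x y z t := by
  simp only [pairJac]
  linear_combination (norm := grind) -malcev_linearized x t y z - malcev_linearized x t z y

@[grind =]
theorem pairJac_swap_middle_mul (x y z t u : R) :
    pairJac x z y t * u = -(pairJac x y z t * u) := by
  rw [pairJac_swap_middle, neg_mul]

theorem pairJac_eq (x y z t : R) :
    pairJac x y z t =
      jac (y * z) x t + jac (z * t) x y - jac x y t * z + jac y z t * x := by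
  rw [pairJac, jac_mul_left x y z t]; abel

theorem two_smul_jac_mul (x y z t : R) :
    2 • jac (x * y) z t =
      pairJac x y z t + jac x y z * t - jac x y t * z - jac z t x * y + jac z t y * x := by
  rw [pairJac]
  linear_combination (norm := grind) jac_mul_left x y z t - jac_mul_left y z t x

theorem three_smul_pairJac (x y z t : R) :
    3 • pairJac x y z t =
      jac x y z * t + jac x z t * y + jac x t y * z - jac y z t * x := by
  have h₁ := pairJac_swap_middle x y z t
  have h₂ := pairJac_swap_middle x y t z
  simp only [pairJac] at *
  linear_combination (norm := grind) sum_jac_mul x y z t + h₁ - h₂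

theorem two_smul_sum_jac_mul_cyclic (x y z t : R) :
    2 • (jac (y * z) x t + jac (z * t) x y + jac (t * y) x z) = -4 • (jac y z t * x) := by
  linear_combination (norm := grind) two_smul_jac_mul y z x t + two_smul_jac_mul z t x y +
    two_smul_jac_mul t y x z + three_smul_pairJac x y z t

theorem jac_mul_mul_add_jac_mul_mul (x y z t u : R) :
    jac x (t * u) (y * z) + jac x (y * u) (z * t) =
      pairJac x u y t * z - pairJac x y z t * u + (jac y z t * u - jac u y t * z) * x := by
  have h₁ := malcev_linearized x u (y * z) t
  have h₂ := malcev_linearized x z (y * u) t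
  have h₃ := malcev_linearized u z (x * t) y
  have h₄ := congrArg (· * x) (jac_mul_left u y z t)
  have e₁ := pairJac_mul_eq_jac x t u y z
  have e₂ := pairJac_mul_eq_jac x t y z u
  simp only [add_mul, sub_mul] at *
  linear_combination (norm := grind) h₁ + h₂ - h₃ + h₄ - e₁ + e₂

theorem pairJac_mul_left (x y z t u : R) :
    pairJac (x * u) y z t =
      pairJac u y z t * x - pairJac x y z t * u -
        (jac (y * z) x u * t + jac (z * t) x u * y + jac (t * y) x u * z) +
        jac y z t * (x * u) := by
  have h₁ := pairJac_eq (x * u) y z t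
  have h₂ := malcev_linearized x t (y * z) u
  have h₃ := malcev_linearized x y (z * t) u
  have h₄ := congrArg (· * x) (pairJac_eq u y z t)
  have h₅ := jac_mul_mul_add_jac_mul_mul x y z t u
  have e₁ := pairJac_mul_eq_jac x u y t z
  simp only [add_mul, sub_mul] at *
  linear_combination (norm := grind) h₁ + h₂ + h₃ - h₄ + h₅ + e₁

theorem pFn_eq_pairJac (x y z t : R) :
    pFn x y z t =
      pairJac x y z t - (triple (y * z) x t + triple (z * t) x y + triple (t * y) x z) := by
  rw [pFn]
  linear_combination (norm := grind) -pairJac_eq_triple x t y z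

theorem pFn_mul_left (x y z t u : R) :
    pFn (x * u) y z t =
      pairJac u y z t * x - pairJac x y z t * u -
        (triple (y * z) x u * t + triple (z * t) x u * y + triple (t * y) x u * z) := by
  have h₁ := pFn_eq_pairJac (x * u) y z t
  have h₂ := pairJac_mul_left x y z t u
  have h₃ := two_smul_sum_jac_mul_cyclic (x * u) y z t
  have h₄ : jac y z t * (x * u) =
      y * z * t * (x * u) + z * t * y * (x * u) + t * y * z * (x * u) := by
    simp only [jac, add_mul]
  simp only [triple_mul_middle] at h₁
  linear_combination (norm := abel) h₁ + h₂ + h₃ - 3 • h₄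

theorem pFn_mul_sub_pFn_mul_left (x y z t u : R) :
    pFn x y z t * u - pFn (x * u) y z t =
      hFn z y u x t + hFn y t u x z - hFn t z x y u := by
  have h₁ := pFn_mul_left x y z t u
  have e₁ := pairJac_mul_eq_triple u t y z x
  have e₂ := pairJac_mul_eq_triple x y z t u
  have e₃ := pairJac_mul_eq_triple x t y z u
  have e₄ := pairJac_mul_eq_triple x z y t u
  simp only [pFn, hFn, add_mul, sub_mul, neg_mul] at h₁ ⊢
  linear_combination (norm := grind) -h₁ - e₁ + e₂ - e₃ - e₄

theorem pairJac_mul_right (x y z u t : R) :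
    pairJac x u t (y * z) =
      pairJac x u y z * t - pairJac x t y z * u - pairJac x y u t * z + pairJac x z u t * y +
        jac y z (u * t) * x - jac (y * z) x u * t + jac (y * z) x t * u -
        jac x u t * (y * z) := by
  linear_combination (norm := grind) -pairJac_mul_left y x u t z -
    pairJac_mul_eq_jac x u y z t + pairJac_mul_eq_jac x t y z u

theorem two_smul_jac_mul_mul (x y z u t : R) :
    2 • jac (u * t) x (y * z) =
      (jac y z (u * t) - jac u t (y * z)) * x + pairJac x u y z * t - pairJac x t y z * u -
        pairJac x y u t * z + pairJac x z u t * y := by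
  rw [sub_mul]
  linear_combination (norm := grind) two_smul_jac_mul u t x (y * z) + pairJac_mul_right x y z u t

theorem pFn_eq_jac (x y z t : R) :
    pFn x y z t =
      jac x y z * t + jac y z t * x - jac (y * z) x t +
        3 • (x * y * (z * t) + x * z * (t * y) + x * t * (y * z)) := by
  have h₁ := pFn_eq_pairJac x y z t
  have h₂ := pairJac_eq x z t y
  simp only [triple_eq_jac, mul_swap (x * y) (z * t), mul_swap (x * z) (t * y),
    mul_swap (x * t) (y * z)] at h₁
  linear_combination (norm := grind) h₁ + h₂

theorem pFn_add_triple_mul_sub_triple_mul (x y z u t : R) :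
    pFn x u t (y * z) + triple (x * u) y z * t - triple (x * t) y z * u =
      3 • (jac y z (u * t) * x) - 4 • (jac u t (y * z) * x) - 7 • jac (u * t) x (y * z) +
        4 • (pairJac x u y z * t - pairJac x t y z * u) -
        3 • (pairJac x y u t * z - pairJac x z u t * y) +
        3 • (x * (u * t) * (y * z) + x * (y * z) * (u * t)) := by
  have hp := pFn_eq_jac x u t (y * z)
  have h₁ := congrArg (· * t) (triple_eq_jac (x * u) y z)
  have h₂ := congrArg (· * u) (triple_eq_jac (x * t) y z)
  have e₁ := pairJac_mul_eq_jac x u y z t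
  have e₂ := pairJac_mul_eq_jac x t y z u
  have h₃ := jac_mul_sub_jac_mul x u t (y * z)
  have h₄ := jac_mul_left x u t (y * z)
  have h₅ := jac_mul_left x t u (y * z)
  have h₆ := three_smul_pairJac x u t (y * z)
  have h₇ := pairJac_mul_right x y z u t
  simp only [add_mul, smul_mul_assoc] at h₁ h₂
  linear_combination (norm := grind)
    hp + h₁ - h₂ - e₁ + e₂ + 3 • h₃ - 3 • h₄ + 3 • h₅ - h₆ + 3 • h₇

theorem pFn_add_triple_mul_sub_triple_mul_comm (x y z u t : R) :
    pFn x u t (y * z) + triple (x * u) y z * t - triple (x * t) y z * u =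
      pFn x y z (u * t) + triple (x * y) u t * z - triple (x * z) u t * y := by
  have h₁ := pFn_add_triple_mul_sub_triple_mul x y z u t
  have h₂ := pFn_add_triple_mul_sub_triple_mul x u t y z
  -- The two expansions differ exactly by a multiple of this identity.
  have h₃ := two_smul_jac_mul_mul x y z u t
  rw [sub_mul] at h₃
  linear_combination (norm := grind) h₁ - h₂ - 7 • h₃

theorem pFn_mul_right_sub_pFn_mul_right (x y z u t : R) :
    pFn x y z (u * t) - pFn x u t (y * z) = hFn u x z y t - hFn x t y z u := by
  rw [hFn, hFn]
  linear_combination (norm := grind) -pFn_add_triple_mul_sub_triple_mul_comm x y z u t +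
    pairJac_mul_eq_triple x y u t z + pairJac_mul_eq_triple x t u y z

end MalcevRing

section Bridge

variable (F : Type*) [Field F] [Module F R]

theorem trip_eq_triple (x y z : R) : trip F (fun a b : R ↦ a * b) x y z = triple x y z := by
  rw [trip, triple, ofNat_smul_eq_nsmul]

theorem hfun_eq_hFn (y z t x u : R) :
    hfun F (fun a b : R ↦ a * b) y z t x u = hFn y z t x u := by
  simp only [hfun, hFn, trip_eq_triple]

theorem pfun_eq_pFn (x y z t : R) : pfun F (fun a b : R ↦ a * b) x y z t = pFn x y z t := by
  simp only [pfun, pFn, trip_eq_triple]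

end Bridge

/-- The nonassociative ring structure on a module whose product is a given bilinear map; it keeps
the additive structure of the module, so that the scalar action stays available. -/
abbrev ringOfBilin {S M : Type*} [CommSemiring S] [AddCommGroup M] [Module S M]
    (mul : M →ₗ[S] M →ₗ[S] M) : NonUnitalNonAssocRing M :=
  { ‹AddCommGroup M› with
    mul := fun a b ↦ mul a b
    left_distrib := fun a ↦ map_add (mul a)
    right_distrib := fun a b c ↦ mul.map_add₂ a b c
    zero_mul := mul.map_zero₂
    mul_zero := fun a ↦ map_zero (mul a) }

end Malcev

open Malcev in
theorem stmt6_p_identities_general {R : Type*} [NonUnitalNonAssocRing R] [IsMalcevRing R]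
    (hR : ∀ y z t x u : R, hFn y z t x u = 0) (x y z t u : R) :
    pFn x y z t * u = pFn (x * u) y z t ∧ pFn x y z (u * t) = pFn x u t (y * z) := by
  constructor <;> rw [← sub_eq_zero]
  · simp only [pFn_mul_sub_pFn_mul_left, hR, add_zero, sub_zero]
  · simp only [pFn_mul_right_sub_pFn_mul_right, hR, sub_zero]

/-- In a Malcev algebra satisfying `h = 0`, the function `p` satisfies
`p(x,y,z,t)u = p(xu,y,z,t)` and `p(x,y,z,ut) = p(x,u,t,yz)`. -/
theorem stmt6_p_identities
    {F M : Type*} [Field F] [AddCommGroup M] [Module F M]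
    (h2 : (2 : F) ≠ 0) (h3 : (3 : F) ≠ 0)
    (mul : M →ₗ[F] M →ₗ[F] M)
    (hmalcev : IsMalcevFun (fun x y : M => mul x y))
    (hH : ∀ y z t x u : M, hfun F (fun a b : M => mul a b) y z t x u = 0) :
    ∀ x y z t u : M,
      mul (pfun F (fun a b : M => mul a b) x y z t) u
        = pfun F (fun a b : M => mul a b) (mul x u) y z t ∧
      pfun F (fun a b : M => mul a b) x y z (mul u t)
        = pfun F (fun a b : M => mul a b) x u t (mul y z) := by
  intro x y z t u
  let _ := Malcev.ringOfBilin mul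
  have := Malcev.isMalcevRing_of_isMalcevFun hmalcev
  have h := stmt6_p_identities_general
    (fun y z t x u ↦ (Malcev.hfun_eq_hFn F y z t x u).symm.trans (hH y z t x u)) x y z t u
  simp only [← Malcev.pfun_eq_pFn F] at h
  exact h
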